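/- Let P : R^n → R be a polynomial that is not constant, and let S = [a₁, b₁] × ⋯ × [aₙ, bₙ] be a compact box with a_j < b_j for each j. Then the oscillatory integral over S vanishes at high frequency: ∫_S cos(t P(x)) dx → 0 and ∫_S sin(t P(x)) dx → 0 as t → ∞; equivalently, ∫_S exp(i t P(x)) dx → 0 as t → ∞. -/

import Mathlib

open MeasureTheory Filter

/-- The preimage of a null set under a nonconstant univariate polynomial is null. -/
lemma poly_preimage_null (p : Polynomial ℝ) (hp : Polynomial.derivative p ≠ 0)
    (N : Set ℝ) (hNm : MeasurableSet N) (hN : volume N = 0) :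
    volume {s : ℝ | p.eval s ∈ N} = 0 := by
  have hmeas : Measurable (fun s : ℝ => p.eval s) := p.continuous.measurable
  have h1 : volume {s : ℝ | p.derivative.eval s = 0} = 0 := by
    have : {s : ℝ | p.derivative.eval s = 0}.Finite := by
      refine (p.derivative.roots.toFinset.finite_toSet).subset ?_
      intro s hs
      simp only [Finset.mem_coe, Multiset.mem_toFinset]
      exact (Polynomial.mem_roots hp).2 hs
    exact this.measure_zero _
  have h2 : volume ({s : ℝ | p.eval s ∈ N} ∩ {s : ℝ | p.derivative.eval s ≠ 0}) = 0 := by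
    apply measure_null_of_locally_null
    rintro x ⟨hxN, hx⟩
    have hsd : HasStrictDerivAt (fun s => p.eval s) (p.derivative.eval x) x :=
      p.hasStrictDerivAt x
    have hev := (hsd.hasStrictFDerivAt_equiv hx).eventually_left_inverse
    obtain ⟨u, hu, huo, hxu⟩ := eventually_nhds_iff.1 hev
    have hinj : Set.InjOn (fun s => p.eval s) u := by
      intro y hy z hz hyz
      rw [← hu y hy, ← hu z hz]
      exact congrArg _ hyz
    set A : Set ℝ := u ∩ ({s : ℝ | p.eval s ∈ N} ∩ {s : ℝ | p.derivative.eval s ≠ 0}) with hA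
    have hAm : MeasurableSet A := by
      refine huo.measurableSet.inter ((hmeas hNm).inter ?_)
      exact (p.derivative.continuous.measurable (measurableSet_singleton 0)).compl
    refine ⟨A, ?_, ?_⟩
    · rw [hA, Set.inter_comm u]
      exact inter_mem_nhdsWithin _ (huo.mem_nhds hxu)
    · have hcv := lintegral_image_eq_lintegral_abs_deriv_mul (s := A)
        (f := fun s => p.eval s) (f' := fun s => p.derivative.eval s) hAm
        (fun y _ => (p.hasDerivAt y).hasDerivWithinAt) (hinj.mono Set.inter_subset_left)
        (fun _ => 1)
      have himg : volume ((fun s => p.eval s) '' A) = 0 := by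
        refine measure_mono_null ?_ hN
        rintro _ ⟨y, hy, rfl⟩
        exact hy.2.1
      rw [setLIntegral_one, himg] at hcv
      have h3 := (setLIntegral_eq_zero_iff hAm (by
        have := p.derivative.continuous.measurable
        fun_prop)).1 hcv.symm
      have : ∀ᵐ y : ℝ, y ∉ A := by
        filter_upwards [h3] with y hy hyA
        have := hy hyA
        simp at this
        exact hyA.2.2 this
      simpa [ae_iff] using this
  refine measure_mono_null ?_ (measure_union_null h1 h2)
  intro s hs
  by_cases h : p.derivative.eval s = 0
  · exact Or.inl h
  · exact Or.inr ⟨hs, h⟩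

/-- Fubini with dilations. -/
lemma null_of_dilation {n : ℕ} (A : Set (Fin n → ℝ)) (hA : MeasurableSet A) (x₀ : Fin n → ℝ)
    (h : ∀ᵐ x : Fin n → ℝ, ∀ᵐ s : ℝ, x₀ + s • x ∉ A) : volume A = 0 := by
  have hm : MeasurableSet {z : (Fin n → ℝ) × ℝ | x₀ + z.2 • z.1 ∉ A} := by
    have : Measurable (fun z : (Fin n → ℝ) × ℝ => x₀ + z.2 • z.1) := by fun_prop
    exact this hA.compl
  have h' := (Measure.ae_ae_comm (p := fun (x : Fin n → ℝ) (s : ℝ) => x₀ + s • x ∉ A) hm).1 h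
  have h0 : ∀ᵐ s : ℝ, s ≠ 0 := by simp [ae_iff]
  obtain ⟨s, hs, hs0⟩ := (h'.and h0).exists
  have h1 : volume ((s • ·) ⁻¹' ((x₀ + ·) ⁻¹' A) : Set (Fin n → ℝ)) = 0 := by
    have hs' := ae_iff.1 hs
    simp only [not_not] at hs'
    exact hs'
  rw [Measure.addHaar_preimage_smul _ hs0, measure_preimage_add] at h1
  rcases mul_eq_zero.1 h1 with h2 | h2
  · exfalso
    rw [ENNReal.ofReal_eq_zero] at h2
    have : 0 < |(s ^ Module.finrank ℝ (Fin n → ℝ))⁻¹| := by positivity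
    linarith
  · exact h2

/-- Restriction of a polynomial to a line. -/
lemma exists_line_poly {n : ℕ} (P : MvPolynomial (Fin n) ℝ) (x₀ x : Fin n → ℝ) :
    ∃ p : Polynomial ℝ, ∀ s : ℝ, p.eval s = MvPolynomial.eval (x₀ + s • x) P := by
  refine ⟨MvPolynomial.aeval (fun i => Polynomial.C (x₀ i) + Polynomial.C (x i) * Polynomial.X) P,
    fun s => ?_⟩
  induction P using MvPolynomial.induction_on with
  | C r => simp
  | add p q hp hq => simp [hp, hq]
  | mul_X p i hp => simp [hp, mul_comm s]

lemma mvpoly_preimage_null {n : ℕ} (P : MvPolynomial (Fin n) ℝ)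
    (hP : ¬ ∃ c : ℝ, ∀ x : Fin n → ℝ, MvPolynomial.eval x P = c)
    (N : Set ℝ) (hNm : MeasurableSet N) (hN : volume N = 0) :
    volume {x : Fin n → ℝ | MvPolynomial.eval x P ∈ N} = 0 := by
  have hmeas : Measurable (fun x : Fin n → ℝ => MvPolynomial.eval x P) :=
    (MvPolynomial.continuous_eval P).measurable
  -- level sets are null
  have hlev : ∀ c : ℝ, volume {x : Fin n → ℝ | MvPolynomial.eval x P = c} = 0 := by
    intro c
    push Not at hP
    obtain ⟨x₁, hx₁⟩ := hP c
    refine null_of_dilation _ (hmeas (measurableSet_singleton c)) x₁ (ae_of_all _ fun x => ?_)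
    obtain ⟨p, hp⟩ := exists_line_poly P x₁ x
    have hne : p - Polynomial.C c ≠ 0 := by
      intro h
      have h0 := congrArg (Polynomial.eval 0) h
      simp [hp] at h0
      exact hx₁ (by linarith)
    have hfin : {s : ℝ | MvPolynomial.eval (x₁ + s • x) P = c}.Finite := by
      refine ((p - Polynomial.C c).roots.toFinset.finite_toSet).subset ?_
      intro s hs
      simp only [Finset.mem_coe, Multiset.mem_toFinset]
      refine (Polynomial.mem_roots hne).2 ?_
      simp only [Set.mem_ofPred_eq] at hs
      simp [Polynomial.IsRoot, hp, hs]
    simpa [ae_iff] using hfin.measure_zero volume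
  refine null_of_dilation _ (hmeas hNm) 0 ?_
  have hae : ∀ᵐ x : Fin n → ℝ, MvPolynomial.eval x P ≠ MvPolynomial.eval 0 P := by
    simpa [ae_iff] using hlev (MvPolynomial.eval 0 P)
  filter_upwards [hae] with x hx
  obtain ⟨p, hp⟩ := exists_line_poly P 0 x
  have hd : p.derivative ≠ 0 := by
    intro h
    obtain hc := Polynomial.eq_C_of_derivative_eq_zero h
    apply hx
    have h0 := hp 0
    have h1 := hp 1
    rw [hc] at h0 h1
    simp only [Polynomial.eval_C, zero_smul, one_smul, zero_add, add_zero] at h0 h1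
    rw [← h0, ← h1]
  have := poly_preimage_null p hd N hNm hN
  simpa [ae_iff, hp] using this

/-- Decay of oscillatory integrals of a nonconstant polynomial phase over a compact box:
`∫_S cos(t P(x)) dx → 0` and `∫_S sin(t P(x)) dx → 0` as `t → ∞`. -/
theorem oscillatory_integral_box_decay
    {n : ℕ} (P : MvPolynomial (Fin n) ℝ)
    (hP : ¬ ∃ c : ℝ, ∀ x : Fin n → ℝ, MvPolynomial.eval x P = c)
    (a b : Fin n → ℝ) (hab : ∀ j, a j < b j) :
    Tendsto (fun t : ℝ =>
        ∫ x in Set.univ.pi fun j => Set.Icc (a j) (b j),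
          Real.cos (t * MvPolynomial.eval x P)) atTop (nhds 0) ∧
    Tendsto (fun t : ℝ =>
        ∫ x in Set.univ.pi fun j => Set.Icc (a j) (b j),
          Real.sin (t * MvPolynomial.eval x P)) atTop (nhds 0) := by
  set S : Set (Fin n → ℝ) := Set.univ.pi fun j => Set.Icc (a j) (b j) with hS
  have hSc : IsCompact S := isCompact_univ_pi fun j => isCompact_Icc
  have hmeas : Measurable (fun x : Fin n → ℝ => MvPolynomial.eval x P) :=
    (MvPolynomial.continuous_eval P).measurable
  have : IsFiniteMeasure (volume.restrict S) := ⟨by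
    simpa using hSc.measure_lt_top⟩
  set μ : Measure ℝ := (volume.restrict S).map (fun x => MvPolynomial.eval x P) with hμ
  have : IsFiniteMeasure μ := by rw [hμ]; infer_instance
  have hac : μ ≪ volume := by
    refine Measure.AbsolutelyContinuous.mk fun N hNm hN => ?_
    rw [hμ, Measure.map_apply hmeas hNm]
    exact Measure.restrict_le_self.absolutelyContinuous (mvpoly_preimage_null P hP N hNm hN)
  have hRL := Real.tendsto_integral_exp_smul_cocompact
    (fun v : ℝ => (((μ.rnDeriv volume v).toReal : ℝ) : ℂ))
  have hlim : Tendsto (fun t : ℝ => -(t / (2 * Real.pi))) atTop (cocompact ℝ) := by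
    refine Tendsto.mono_right ?_ atBot_le_cocompact
    exact tendsto_neg_atTop_atBot.comp (tendsto_id.atTop_div_const (by positivity))
  have key : Tendsto (fun t : ℝ => ∫ x in S,
      Complex.exp (((t * MvPolynomial.eval x P : ℝ) : ℂ) * Complex.I)) atTop (nhds 0) := by
    refine (hRL.comp hlim).congr fun t => ?_
    have e1 : ∫ x in S, Complex.exp (((t * MvPolynomial.eval x P : ℝ) : ℂ) * Complex.I)
        = ∫ v, Complex.exp (((t * v : ℝ) : ℂ) * Complex.I) ∂μ := by
      rw [hμ, integral_map hmeas.aemeasurable]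
      exact (Continuous.aestronglyMeasurable (by fun_prop))
    rw [e1, ← integral_rnDeriv_smul hac]
    simp only [Function.comp]
    refine integral_congr_ae (ae_of_all _ fun v => ?_)
    have hpi : (2 * Real.pi) * (-(v * -(t / (2 * Real.pi)))) = t * v := by
      have := Real.pi_ne_zero
      field_simp
    simp only [Circle.smul_def, Real.fourierChar_apply, hpi, smul_eq_mul, Complex.real_smul]
    rw [mul_comm]
  have hint : ∀ t : ℝ, Integrable (fun x : Fin n → ℝ =>
      Complex.exp (((t * MvPolynomial.eval x P : ℝ) : ℂ) * Complex.I)) (volume.restrict S) := by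
    intro t
    have hc := MvPolynomial.continuous_eval P
    exact ContinuousOn.integrableOn_compact hSc (Continuous.continuousOn (by fun_prop))
  constructor
  · have := (Complex.continuous_re.tendsto 0).comp key
    refine this.congr fun t => ?_
    simp only [Function.comp]
    have h := integral_re (hint t)
    simp only [RCLike.re_eq_complex_re, Complex.exp_ofReal_mul_I_re] at h
    exact h.symm
  · have := (Complex.continuous_im.tendsto 0).comp key
    refine this.congr fun t => ?_
    simp only [Function.comp]
    have h := integral_im (hint t)
    simp only [RCLike.im_eq_complex_im, Complex.exp_ofReal_mul_I_im] at h
    exact h.symm
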